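/- arXiv:2407.19574 — 2 statements merged into one kernel-verified Lean document; each statement's English description precedes it below -/
import Mathlib

section
/- Let C be a localizing subcategory of the derived category D(Mod R) of a ring R. If X* is a bounded-above complex of R-modules such that each term X^i lies in C (viewed as a complex concentrated in one degree), then X* lies in C. -/
/-!
STATEMENT 3: Let `C` be a localizing subcategory of the derived category
`D(Mod R)` of a ring `R`.  If `X*` is a bounded-above complex of `R`-modules
such that each term `X^i` lies in `C` (viewed as a complex concentrated in one
degree), then `X*` lies in `C`.
-/

open CategoryTheory CategoryTheory.Limits CategoryTheory.Pretriangulated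

universe w u

/-- A localizing subcategory of a (pre)triangulated category with coproducts. -/
structure IsLocalizing (C : Type*) [Category C] [HasZeroObject C]
    [Preadditive C] [HasShift C ℤ] [∀ n : ℤ, (shiftFunctor C n).Additive]
    [Pretriangulated C] [HasCoproducts.{u} C] (P : C → Prop) : Prop where
  zero : ∀ X : C, IsZero X → P X
  iso_closed : ∀ {X Y : C}, (X ≅ Y) → P X → P Y
  shift_closed : ∀ (X : C) (n : ℤ), P X → P (X⟦n⟧)
  ext_closed : ∀ T ∈ distinguishedTriangles (C := C),
      P T.obj₁ → P T.obj₃ → P T.obj₂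
  coproduct_closed : ∀ {J : Type u} (f : J → C), (∀ j, P (f j)) → P (∐ f)

namespace LocAux

section Sc
variable {R : Type u} [Ring R]

lemma sc_lift (S : ShortComplex (ModuleCat.{u} R)) (x : S.X₂) (hx : S.g x = 0) :
    ∃ c : S.cycles, S.iCycles c = x :=
  (ShortComplex.moduleCat_exact_iff _).1 (ShortComplex.exact_of_f_is_kernel
    (ShortComplex.mk S.iCycles S.g S.iCycles_g) S.cyclesIsKernel) x hx

lemma sc_inj (S : ShortComplex (ModuleCat.{u} R)) : Function.Injective S.iCycles :=
  (ModuleCat.mono_iff_injective _).1 inferInstance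

lemma sc_surj (S : ShortComplex (ModuleCat.{u} R)) : Function.Surjective S.homologyπ :=
  (ModuleCat.epi_iff_surjective _).1 inferInstance

lemma sc_zero (S : ShortComplex (ModuleCat.{u} R)) (c : S.cycles) :
    S.homologyπ c = 0 ↔ ∃ y, S.f y = S.iCycles c := by
  have hi : ∀ y, S.iCycles (S.toCycles y) = S.f y := fun y =>
    ConcreteCategory.congr_hom S.toCycles_i y
  constructor
  · intro h
    obtain ⟨y, hy⟩ := (ShortComplex.moduleCat_exact_iff _).1 (ShortComplex.exact_of_g_is_cokernel
      (ShortComplex.mk S.toCycles S.homologyπ S.toCycles_comp_homologyπ) S.homologyIsCokernel) c h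
    refine ⟨y, ?_⟩
    rw [← hi]
    exact congrArg _ hy
  · rintro ⟨y, hy⟩
    rw [← hi] at hy
    rw [← sc_inj S hy]
    exact ConcreteCategory.congr_hom S.toCycles_comp_homologyπ y

lemma sc_g (S : ShortComplex (ModuleCat.{u} R)) (c : S.cycles) : S.g (S.iCycles c) = 0 :=
  ConcreteCategory.congr_hom S.iCycles_g c

lemma sc_quasiIso_iff {S₁ S₂ : ShortComplex (ModuleCat.{u} R)} (φ : S₁ ⟶ S₂) :
    ShortComplex.QuasiIso φ ↔
      (∀ x₂ : S₁.X₂, S₁.g x₂ = 0 → ∀ y₁ : S₂.X₁, φ.τ₂ x₂ = S₂.f y₁ → ∃ x₁, S₁.f x₁ = x₂) ∧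
      (∀ y₂ : S₂.X₂, S₂.g y₂ = 0 → ∃ (x₂ : S₁.X₂) (y₁ : S₂.X₁),
        S₁.g x₂ = 0 ∧ y₂ = φ.τ₂ x₂ + S₂.f y₁) := by
  have h1 : ∀ x, ShortComplex.homologyMap φ (S₁.homologyπ x) =
      S₂.homologyπ (ShortComplex.cyclesMap φ x) := fun x =>
    ConcreteCategory.congr_hom (ShortComplex.homologyπ_naturality φ) x
  have h2 : ∀ x, S₂.iCycles (ShortComplex.cyclesMap φ x) = φ.τ₂ (S₁.iCycles x) := fun x =>
    ConcreteCategory.congr_hom (ShortComplex.cyclesMap_i φ) x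
  rw [ShortComplex.quasiIso_iff, ConcreteCategory.isIso_iff_bijective, Function.Bijective]
  refine and_congr ?_ ?_
  · rw [injective_iff_map_eq_zero]
    constructor
    · intro h x₂ hx y₁ hy
      obtain ⟨c, rfl⟩ := sc_lift _ _ hx
      refine (sc_zero _ _).1 (h _ ?_)
      rw [h1]
      refine (sc_zero _ _).2 ⟨y₁, ?_⟩
      rw [h2]; exact hy.symm
    · intro h a ha
      obtain ⟨x, rfl⟩ := sc_surj _ a
      rw [h1] at ha
      obtain ⟨y, hy⟩ := (sc_zero _ _).1 ha
      rw [h2] at hy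
      exact (sc_zero _ _).2 (h _ (sc_g _ _) y hy.symm)
  · constructor
    · intro h y₂ hy
      obtain ⟨c, rfl⟩ := sc_lift _ _ hy
      obtain ⟨a, ha⟩ := h (S₂.homologyπ c)
      obtain ⟨x, rfl⟩ := sc_surj _ a
      rw [h1, ← sub_eq_zero, ← map_sub] at ha
      obtain ⟨y, hy⟩ := (sc_zero _ _).1 ha
      refine ⟨S₁.iCycles x, -y, sc_g _ _, ?_⟩
      rw [map_neg, hy, map_sub, h2]; abel
    · intro h b
      obtain ⟨y, rfl⟩ := sc_surj _ b
      obtain ⟨x, y₁, hx, e⟩ := h _ (sc_g _ y)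
      obtain ⟨c, rfl⟩ := sc_lift _ _ hx
      refine ⟨S₁.homologyπ c, ?_⟩
      rw [h1, ← sub_eq_zero, ← map_sub]
      refine (sc_zero _ _).2 ⟨-y₁, ?_⟩
      rw [map_sub, h2, e, map_neg]; abel

end Sc

section DSum

open DirectSum

variable {R : Type u} [Ring R] {J : Type} [DecidableEq J]

/-- direct sum of complexes -/
noncomputable def dsum (K : J → CochainComplex (ModuleCat.{u} R) ℤ) :
    CochainComplex (ModuleCat.{u} R) ℤ where
  X i := ModuleCat.of R (⨁ j, (K j).X i)
  d i i' := ModuleCat.ofHom (DirectSum.lmap fun j => ((K j).d i i').hom)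
  shape i i' h := by
    ext : 1
    refine DirectSum.linearMap_ext _ fun j => ?_
    ext x : 1
    simp [(K j).shape i i' h]
  d_comp_d' i j k _ _ := by
    ext : 1
    refine DirectSum.linearMap_ext _ fun l => ?_
    ext x : 1
    have h : (K l).d j k ((K l).d i j x) = 0 :=
      ConcreteCategory.congr_hom ((K l).d_comp_d i j k) x
    simp only [ModuleCat.hom_comp, ModuleCat.hom_ofHom, LinearMap.comp_apply, DirectSum.lmap_lof]
    refine (congrArg _ h).trans ?_
    simp

variable {K L : J → CochainComplex (ModuleCat.{u} R) ℤ}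

/-- degreewise inclusion -/
noncomputable def inc (K : J → CochainComplex (ModuleCat.{u} R) ℤ) (i : ℤ) (j : J) :
    (K j).X i ⟶ (dsum K).X i :=
  ModuleCat.ofHom (DirectSum.lof R J (fun j => (K j).X i) j)

/-- degreewise projection -/
noncomputable def cmp {i : ℤ} (j : J) :
    (dsum K).X i ⟶ (K j).X i :=
  ModuleCat.ofHom (DirectSum.component R J (fun j => (K j).X i) j)

/-- degreewise desc -/
noncomputable def xdesc {i : ℤ} {M : ModuleCat.{u} R} (g : ∀ j, (K j).X i ⟶ M) :
    (dsum K).X i ⟶ M :=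
  ModuleCat.ofHom (DirectSum.toModule R J M fun j => (g j).hom)

lemma inc_xdesc {i : ℤ} {M : ModuleCat.{u} R} (g : ∀ j, (K j).X i ⟶ M) (j : J) :
    inc K i j ≫ xdesc g = g j := by
  ext x
  exact DirectSum.toModule_lof (R := R) (M := fun j => (K j).X i) (φ := fun j => (g j).hom) j x

lemma inc_xdesc_assoc {i : ℤ} {M Z : ModuleCat.{u} R} (g : ∀ j, (K j).X i ⟶ M) (j : J)
    (t : M ⟶ Z) : inc K i j ≫ xdesc g ≫ t = g j ≫ t := by
  rw [← Category.assoc, inc_xdesc]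

lemma inc_hom_ext {i : ℤ} {M : ModuleCat.{u} R} {f g : (dsum K).X i ⟶ M}
    (h : ∀ (j : J), inc K i j ≫ f = inc K i j ≫ g) : f = g := by
  apply ModuleCat.hom_ext
  refine DirectSum.linearMap_ext _ fun j => ?_
  exact congrArg ModuleCat.Hom.hom (h j)

lemma inc_cmp_self (i : ℤ) (j : J) : inc K i j ≫ cmp j = 𝟙 _ := by
  ext x
  exact DirectSum.component.lof_self R (M := fun j => (K j).X i) j x

lemma inc_cmp_self_assoc (i : ℤ) (j : J) {Z : ModuleCat.{u} R} (t : (K j).X i ⟶ Z) :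
    inc K i j ≫ cmp j ≫ t = t := by
  rw [← Category.assoc, inc_cmp_self, Category.id_comp]

lemma inc_cmp_ne (i : ℤ) (j j' : J) (h : j ≠ j') : inc K i j ≫ cmp j' = 0 := by
  ext x
  refine (DirectSum.component.of R (M := fun j => (K j).X i) j' j x).trans ?_
  rw [dif_neg h]; rfl

lemma inc_cmp_ne_assoc (i : ℤ) (j j' : J) (h : j ≠ j') {Z : ModuleCat.{u} R}
    (t : (K j').X i ⟶ Z) : inc K i j ≫ cmp j' ≫ t = 0 ≫ t := by
  rw [← Category.assoc, inc_cmp_ne _ _ _ h]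

lemma cmp_ext {i : ℤ} {x y : (dsum K).X i} (h : ∀ j, cmp j x = cmp j y) : x = y :=
  DFinsupp.ext (β := fun j => (K j).X i) h

lemma cmp_exists {i : ℤ} (s : Finset J) (a : ∀ j, (K j).X i) :
    ∃ x : (dsum K).X i, ∀ j, cmp j x = if j ∈ s then a j else 0 :=
  ⟨(DFinsupp.mk s fun j => a j.1 : Π₀ j, (K j).X i), fun j =>
    by
    refine (DFinsupp.mk_apply (β := fun j => (K j).X i) (s := s) (x := fun j => a j.1) (i := j)).trans ?_
    split_ifs <;> rfl⟩

lemma cmp_support {i : ℤ} (x : (dsum K).X i) : ∃ s : Finset J, ∀ j, j ∉ s → cmp j x = 0 := by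
  classical
  exact ⟨DFinsupp.support (β := fun j => (K j).X i) x, fun j hj =>
    (DFinsupp.notMem_support_iff (β := fun j => (K j).X i)).1 hj⟩

lemma inc_d (i i' : ℤ) (j : J) :
    inc K i j ≫ (dsum K).d i i' = (K j).d i i' ≫ inc K i' j := by
  ext x
  exact DirectSum.lmap_lof ..

lemma inc_d_assoc (i i' : ℤ) (j : J) {Z : ModuleCat.{u} R} (t : (dsum K).X i' ⟶ Z) :
    inc K i j ≫ (dsum K).d i i' ≫ t = (K j).d i i' ≫ inc K i' j ≫ t := by
  rw [← Category.assoc, inc_d, Category.assoc]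

/-- inclusion -/
noncomputable def dincl (K : J → CochainComplex (ModuleCat.{u} R) ℤ) (j : J) : K j ⟶ dsum K where
  f i := inc K i j
  comm' := fun _ _ _ => inc_d (K := K) _ _ j

/-- descent of maps -/
noncomputable def ddesc {Y : CochainComplex (ModuleCat.{u} R) ℤ} (g : ∀ j, K j ⟶ Y) :
    dsum K ⟶ Y where
  f i := xdesc fun j => (g j).f i
  comm' i i' _ := by
    refine inc_hom_ext fun j => ?_
    rw [inc_xdesc_assoc, inc_d_assoc, inc_xdesc, (g j).comm]

lemma inc_ddesc {Y : CochainComplex (ModuleCat.{u} R) ℤ} (g : ∀ j, K j ⟶ Y) (i : ℤ) (j : J) :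
    inc K i j ≫ (ddesc g).f i = (g j).f i := inc_xdesc _ _

lemma dincl_ddesc {Y : CochainComplex (ModuleCat.{u} R) ℤ} (g : ∀ j, K j ⟶ Y) (j : J) :
    dincl K j ≫ ddesc g = g j := by
  ext1 i
  exact inc_xdesc _ _

lemma dincl_ddesc_assoc {Y Z : CochainComplex (ModuleCat.{u} R) ℤ} (g : ∀ j, K j ⟶ Y) (j : J)
    (t : Y ⟶ Z) : dincl K j ≫ ddesc g ≫ t = g j ≫ t := by
  rw [← Category.assoc, dincl_ddesc]

lemma dhom_ext {Y : CochainComplex (ModuleCat.{u} R) ℤ} {f g : dsum K ⟶ Y}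
    (h : ∀ j, dincl K j ≫ f = dincl K j ≫ g) : f = g := by
  ext1 i
  refine inc_hom_ext fun j => ?_
  exact congrArg (fun t => HomologicalComplex.Hom.f t i) (h j)

/-- map -/
noncomputable def dmap (s : ∀ j, K j ⟶ L j) : dsum K ⟶ dsum L := ddesc fun j => s j ≫ dincl L j

lemma d_cmp (i i' : ℤ) (j : J) :
    (dsum K).d i i' ≫ cmp j = cmp j ≫ (K j).d i i' := by
  refine inc_hom_ext fun j' => ?_
  rw [inc_d_assoc]
  by_cases h : j' = j
  · subst h
    rw [inc_cmp_self, inc_cmp_self_assoc, Category.comp_id]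
  · rw [inc_cmp_ne _ _ _ h, inc_cmp_ne_assoc _ _ _ h, comp_zero, zero_comp]

lemma dmap_cmp (s : ∀ j, K j ⟶ L j) (i : ℤ) (j : J) :
    (dmap s).f i ≫ cmp j = cmp j ≫ (s j).f i := by
  refine inc_hom_ext fun j' => ?_
  have : inc K i j' ≫ (dmap s).f i = (s j').f i ≫ inc L i j' := inc_xdesc _ _
  rw [← Category.assoc, this, Category.assoc]
  by_cases h : j' = j
  · subst h
    rw [inc_cmp_self, inc_cmp_self_assoc, Category.comp_id]
  · rw [inc_cmp_ne _ _ _ h, inc_cmp_ne_assoc _ _ _ h, comp_zero, zero_comp]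

lemma d_cmp_apply (i i' : ℤ) (j : J) (x : (dsum K).X i) :
    cmp j ((dsum K).d i i' x) = (K j).d i i' (cmp j x) :=
  ConcreteCategory.congr_hom (d_cmp i i' j) x

lemma dmap_cmp_apply (s : ∀ j, K j ⟶ L j) (i : ℤ) (j : J) (x : (dsum K).X i) :
    cmp j ((dmap s).f i x) = (s j).f i (cmp j x) :=
  ConcreteCategory.congr_hom (dmap_cmp s i j) x

lemma quasiIsoAt_elem_iff {A B : CochainComplex (ModuleCat.{u} R) ℤ} (s : A ⟶ B) (i : ℤ) :
    QuasiIsoAt s i ↔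
      (∀ x : A.X i, A.d i ((ComplexShape.up ℤ).next i) x = 0 →
        ∀ y : B.X ((ComplexShape.up ℤ).prev i), s.f i x = B.d _ i y →
          ∃ z : A.X ((ComplexShape.up ℤ).prev i), A.d _ i z = x) ∧
      (∀ y : B.X i, B.d i ((ComplexShape.up ℤ).next i) y = 0 →
        ∃ (x : A.X i) (z : B.X ((ComplexShape.up ℤ).prev i)),
          A.d i ((ComplexShape.up ℤ).next i) x = 0 ∧ y = s.f i x + B.d _ i z) := by
  rw [quasiIsoAt_iff, sc_quasiIso_iff]
  exact Iff.rfl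

lemma quasiIso_dmap (s : ∀ j, K j ⟶ L j) (hs : ∀ j, QuasiIso (s j)) : QuasiIso (dmap s) := by
  classical
  rw [quasiIso_iff]
  intro i
  rw [quasiIsoAt_elem_iff]
  have H : ∀ j, _ := fun j => (quasiIsoAt_elem_iff (s j) i).1 inferInstance
  constructor
  · intro x hx y hy
    obtain ⟨t, ht⟩ := cmp_support x
    have H1 : ∀ j, ∃ z : (K j).X ((ComplexShape.up ℤ).prev i), (K j).d _ i z = cmp j x := by
      intro j
      refine (H j).1 (cmp j x) ?_ (cmp j y) ?_
      · rw [← d_cmp_apply, hx, map_zero]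
      · rw [← dmap_cmp_apply, hy, d_cmp_apply]
    choose a ha using H1
    obtain ⟨z, hz⟩ := cmp_exists t a
    refine ⟨z, cmp_ext fun j => ?_⟩
    rw [d_cmp_apply, hz]
    split_ifs with hj
    · exact ha j
    · rw [map_zero, ht j hj]
  · intro y hy
    obtain ⟨t, ht⟩ := cmp_support y
    have H2 := fun j => (H j).2 (cmp j y) (by rw [← d_cmp_apply, hy, map_zero])
    choose a b hab using H2
    obtain ⟨x, hx⟩ := cmp_exists t a
    obtain ⟨z, hz⟩ := cmp_exists t b
    refine ⟨x, z, cmp_ext fun j => ?_, cmp_ext fun j => ?_⟩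
    · rw [d_cmp_apply, hx, map_zero]
      split_ifs
      · exact (hab j).1
      · exact map_zero _
    · rw [map_add, dmap_cmp_apply, d_cmp_apply, hx, hz]
      split_ifs with hj
      · exact (hab j).2
      · rw [map_zero, map_zero, add_zero, ht j hj]

end DSum

section Coprod

variable {R : Type u} [Ring R] [HasDerivedCategory.{w} (ModuleCat.{u} R)]

open DerivedCategory in
lemma exists_homotopy_of_Q_map_eq_zero {A B : CochainComplex (ModuleCat.{u} R) ℤ} (f : A ⟶ B)
    (hf : Q.map f = 0) :
    ∃ (A' : CochainComplex (ModuleCat.{u} R) ℤ) (s : A' ⟶ A), QuasiIso s ∧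
      Nonempty (Homotopy (s ≫ f) 0) := by
  have h0 : Qh.map ((HomotopyCategory.quotient _ _).map f) = 0 := by
    rw [← cancel_mono ((quotientCompQhIso _).hom.app B), quotientCompQhIso_hom_naturality, hf,
      comp_zero, zero_comp]
  have h1 : Qh.map ((HomotopyCategory.quotient _ _).map f) = Qh.map 0 := by
    rw [h0, Functor.map_zero]
  obtain ⟨A', s, hs, e⟩ := (MorphismProperty.map_eq_iff_precomp Qh
    (HomotopyCategory.quasiIso (ModuleCat.{u} R) (ComplexShape.up ℤ)) _ _).1 h1
  obtain ⟨A', rfl⟩ := HomotopyCategory.quotient_obj_surjective A'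
  obtain ⟨s, rfl⟩ := (HomotopyCategory.quotient _ _).map_surjective s
  refine ⟨A', s, ?_, ?_⟩
  · exact (HomotopyCategory.quotient_map_mem_quasiIso_iff s).1 hs
  · rw [← HomotopyCategory.quotient_map_eq_zero_iff, Functor.map_comp, e, comp_zero]

lemma homotopy_desc {J : Type} [DecidableEq J] {A : J → CochainComplex (ModuleCat.{u} R) ℤ}
    {Y : CochainComplex (ModuleCat.{u} R) ℤ}
    (f : dsum A ⟶ Y) (h : ∀ j, Homotopy (dincl A j ≫ f) 0) : Nonempty (Homotopy f 0) := by
  refine ⟨{ hom := fun i i' => xdesc fun j => (h j).hom i i', zero := ?_, comm := ?_ }⟩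
  · intro i i' hi
    refine inc_hom_ext fun j => ?_
    rw [inc_xdesc, (h j).zero _ _ hi, comp_zero]
  · intro i
    refine inc_hom_ext fun j => ?_
    have e := (h j).comm i
    rw [dNext_eq _ (show (ComplexShape.up ℤ).Rel i (i + 1) from rfl),
      prevD_eq _ (show (ComplexShape.up ℤ).Rel (i - 1) i by simp)] at e ⊢
    rw [HomologicalComplex.zero_f, add_zero] at e ⊢
    rw [Preadditive.comp_add, inc_d_assoc, inc_xdesc, inc_xdesc_assoc]
    exact e

open DerivedCategory in
lemma Q_dsum_zero {J : Type} [DecidableEq J] {K : J → CochainComplex (ModuleCat.{u} R) ℤ}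
    {Y : CochainComplex (ModuleCat.{u} R) ℤ} (h : Q.obj (dsum K) ⟶ Q.obj Y)
    (hh : ∀ j, Q.map (dincl K j) ≫ h = 0) : h = 0 := by
  obtain ⟨Y', g, s, hs, rfl⟩ := left_fac h
  have h1 : ∀ j, Q.map (dincl K j ≫ g) = 0 := by
    intro j
    have := hh j
    rw [← Category.assoc, ← Functor.map_comp] at this
    rw [← cancel_mono (inv (Q.map s)), this, zero_comp]
  choose A t ht H using fun j => exists_homotopy_of_Q_map_eq_zero _ (h1 j)
  have hd := quasiIso_dmap t ht
  rw [← isIso_Q_map_iff_quasiIso] at hd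
  obtain ⟨H'⟩ := homotopy_desc (dmap t ≫ g) (fun j => (Homotopy.ofEq (by
    rw [dmap, dincl_ddesc_assoc, Category.assoc])).trans (H j).some)
  have := Q_map_eq_of_homotopy _ H'
  rw [Functor.map_comp, Functor.map_zero] at this
  have hg : Q.map g = 0 := by
    rw [← cancel_epi (Q.map (dmap t)), this, comp_zero]
  rw [hg, zero_comp]

open DerivedCategory in
lemma Q_dsum_exists {J : Type} [DecidableEq J] {K : J → CochainComplex (ModuleCat.{u} R) ℤ}
    {Y : CochainComplex (ModuleCat.{u} R) ℤ} (g : ∀ j, Q.obj (K j) ⟶ Q.obj Y) :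
    ∃ h : Q.obj (dsum K) ⟶ Q.obj Y, ∀ j, Q.map (dincl K j) ≫ h = g j := by
  choose A t ht f hf using fun j => right_fac (g j)
  have hd := quasiIso_dmap t (fun j => (isIso_Q_map_iff_quasiIso _ _).1 (ht j))
  rw [← isIso_Q_map_iff_quasiIso] at hd
  refine ⟨inv (Q.map (dmap t)) ≫ Q.map (ddesc f), fun j => ?_⟩
  have := ht j
  rw [hf j, ← cancel_epi (Q.map (t j)), IsIso.hom_inv_id_assoc, ← Functor.map_comp_assoc,
    ← dincl_ddesc (fun j => t j ≫ dincl K j) j, Functor.map_comp_assoc]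
  change Q.map (dincl A j) ≫ Q.map (dmap t) ≫ _ = _
  rw [IsIso.hom_inv_id_assoc, ← Functor.map_comp, dincl_ddesc]

open DerivedCategory in
lemma Q_dsum_iso (K : ℕ → CochainComplex (ModuleCat.{u} R) ℤ)
    [HasCoproducts.{u} (DerivedCategory (ModuleCat.{u} R))] :
    Nonempty ((∐ fun j : ULift.{u} ℕ => Q.obj (K j.down)) ≅ Q.obj (dsum K)) := by
  let T := ∐ fun j : ULift.{u} ℕ => Q.obj (K j.down)
  let e : Q.obj (Q.objPreimage T) ≅ T := Q.objObjPreimageIso T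
  obtain ⟨h, hh⟩ := Q_dsum_exists (K := K) (Y := Q.objPreimage T)
    (fun j => Sigma.ι (fun j : ULift.{u} ℕ => Q.obj (K j.down)) ⟨j⟩ ≫ e.inv)
  refine ⟨{ hom := Sigma.desc fun j => Q.map (dincl K j.down), inv := h ≫ e.hom,
            hom_inv_id := ?_, inv_hom_id := ?_ }⟩
  · refine Sigma.hom_ext _ _ fun j => ?_
    rw [Sigma.ι_desc_assoc, ← Category.assoc, hh j.down, Category.assoc, e.inv_hom_id, Category.comp_id]
  · rw [← sub_eq_zero]
    refine Q_dsum_zero _ fun j => ?_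
    rw [Preadditive.comp_sub, ← Category.assoc, ← Category.assoc, hh j, Category.assoc, Category.assoc,
      e.inv_hom_id_assoc, Category.comp_id, sub_eq_zero]
    exact Sigma.ι_desc (fun j : ULift.{u} ℕ => Q.map (dincl K j.down)) ⟨j⟩

end Coprod

section Trunc

variable {R : Type u} [Ring R]

/-- the submodule of the stupid filtration -/
def tS (X : CochainComplex (ModuleCat.{u} R) ℤ) (m i : ℤ) : Submodule R (X.X i) where
  carrier := {x | i < m → x = 0}
  add_mem' := by
    intro a b ha hb h
    rw [ha h, hb h, add_zero]
  zero_mem' := fun _ => rfl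
  smul_mem' := by
    intro c x hx h
    rw [hx h, smul_zero]

lemma mem_tS {X : CochainComplex (ModuleCat.{u} R) ℤ} {m i : ℤ} {x : X.X i} :
    x ∈ tS X m i ↔ (i < m → x = 0) := Iff.rfl

lemma d_mem_tS (X : CochainComplex (ModuleCat.{u} R) ℤ) (m i i' : ℤ) (x : X.X i)
    (hx : x ∈ tS X m i) : (X.d i i').hom x ∈ tS X m i' := by
  intro h
  by_cases hi : i + 1 = i'
  · rw [mem_tS.1 hx (by omega), map_zero]
  · rw [X.shape _ _ hi]
    rfl

/-- the stupid filtration -/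
noncomputable def sub (X : CochainComplex (ModuleCat.{u} R) ℤ) (m : ℤ) :
    CochainComplex (ModuleCat.{u} R) ℤ where
  X i := ModuleCat.of R (tS X m i)
  d i i' := ModuleCat.ofHom ((X.d i i').hom.restrict (d_mem_tS X m i i'))
  shape i i' h := by
    ext x
    exact ConcreteCategory.congr_hom (X.shape i i' h) x.1
  d_comp_d' i j k _ _ := by
    ext x
    exact ConcreteCategory.congr_hom (X.d_comp_d i j k) x.1

/-- the inclusion -/
noncomputable def subι (X : CochainComplex (ModuleCat.{u} R) ℤ) (m : ℤ) : sub X m ⟶ X where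
  f i := ModuleCat.ofHom (tS X m i).subtype
  comm' _ _ _ := rfl

lemma subι_inj (X : CochainComplex (ModuleCat.{u} R) ℤ) (m i : ℤ) :
    Function.Injective ((subι X m).f i) := Subtype.val_injective

lemma subι_lift (X : CochainComplex (ModuleCat.{u} R) ℤ) (m i : ℤ) (x : X.X i)
    (hx : i < m → x = 0) : ∃ y, (subι X m).f i y = x := ⟨⟨x, hx⟩, rfl⟩

lemma subι_eq_zero (X : CochainComplex (ModuleCat.{u} R) ℤ) (m i : ℤ) (h : i < m)
    (y : (sub X m).X i) : y = 0 := by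
  apply subι_inj
  rw [map_zero]
  exact y.2 h

/-- the transition maps -/
noncomputable def tr (X : CochainComplex (ModuleCat.{u} R) ℤ) (m m' : ℤ) (h : m' ≤ m) :
    sub X m ⟶ sub X m' where
  f i := ModuleCat.ofHom (Submodule.inclusion (show tS X m i ≤ tS X m' i from
    fun _ hx hi => hx (lt_of_lt_of_le hi h)))
  comm' _ _ _ := rfl

lemma tr_subι (X : CochainComplex (ModuleCat.{u} R) ℤ) (m m' : ℤ) (h : m' ≤ m) :
    tr X m m' h ≫ subι X m' = subι X m := rfl

lemma tr_subι_apply (X : CochainComplex (ModuleCat.{u} R) ℤ) (m m' : ℤ) (h : m' ≤ m) (i : ℤ)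
    (x : (sub X m).X i) : (subι X m').f i ((tr X m m' h).f i x) = (subι X m).f i x := rfl

lemma tr_inj (X : CochainComplex (ModuleCat.{u} R) ℤ) (m m' : ℤ) (h : m' ≤ m) (i : ℤ) :
    Function.Injective ((tr X m m' h).f i) := by
  intro x y hxy
  apply subι_inj
  rw [← tr_subι_apply X m m' h, hxy, tr_subι_apply]

/-- the projection to the graded piece -/
noncomputable def toGr (X : CochainComplex (ModuleCat.{u} R) ℤ) (m : ℤ) :
    sub X m ⟶ (HomologicalComplex.single _ _ m).obj (X.X m) :=
  HomologicalComplex.mkHomToSingle ((subι X m).f m) (by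
    intro i hi
    ext x
    have hi' : i + 1 = m := hi
    rw [subι_eq_zero X m i (by omega) x, map_zero, map_zero])

lemma toGr_f (X : CochainComplex (ModuleCat.{u} R) ℤ) (m : ℤ) :
    (toGr X m).f m ≫ (HomologicalComplex.singleObjXSelf (ComplexShape.up ℤ) m (X.X m)).hom =
      (subι X m).f m := by
  simp [toGr]

lemma tr_toGr (X : CochainComplex (ModuleCat.{u} R) ℤ) (m : ℤ) :
    tr X (m + 1) m (by omega) ≫ toGr X m = 0 := by
  apply HomologicalComplex.to_single_hom_ext
  ext x
  rw [subι_eq_zero X (m + 1) m (by omega) x, map_zero, map_zero]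

/-- graded short complex -/
noncomputable def grSc (X : CochainComplex (ModuleCat.{u} R) ℤ) (m : ℤ) :
    ShortComplex (CochainComplex (ModuleCat.{u} R) ℤ) :=
  ShortComplex.mk _ _ (tr_toGr X m)

lemma grSc_shortExact (X : CochainComplex (ModuleCat.{u} R) ℤ) (m : ℤ) :
    (grSc X m).ShortExact := by
  apply HomologicalComplex.shortExact_of_degreewise_shortExact
  intro i
  refine { exact := ?_, mono_f := ?_, epi_g := ?_ }
  · rw [ShortComplex.moduleCat_exact_iff]
    intro (x : (sub X m).X i) (hx : (toGr X m).f i x = 0)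
    obtain ⟨y, hy⟩ := subι_lift X (m + 1) i ((subι X m).f i x) (by
      intro h
      by_cases h' : i < m
      · rw [subι_eq_zero X m i h' x, map_zero]
      · obtain rfl : i = m := by omega
        rw [← toGr_f]
        rw [ModuleCat.comp_apply, hx, map_zero])
    refine ⟨y, subι_inj X m i ?_⟩
    exact (tr_subι_apply X (m + 1) m (by omega) i y).trans hy
  · exact (ModuleCat.mono_iff_injective _).2 (tr_inj X (m + 1) m (by omega) i)
  · change Epi ((toGr X m).f i)
    by_cases h : i = m
    · subst h
      rw [← epi_comp_iff_of_isIso _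
        (HomologicalComplex.singleObjXSelf (ComplexShape.up ℤ) i (X.X i)).hom, toGr_f,
        ModuleCat.epi_iff_surjective]
      intro x
      exact subι_lift X i i x (fun h => absurd h (lt_irrefl _))
    · exact (HomologicalComplex.isZero_single_obj_X _ _ _ _ h).epi _

end Trunc

section Tel

variable {R : Type u} [Ring R] (X : CochainComplex (ModuleCat.{u} R) ℤ) (N : ℤ)

/-- the sequence -/
noncomputable def seq (k : ℕ) : CochainComplex (ModuleCat.{u} R) ℤ := sub X (N - k)

/-- transition -/
noncomputable def seqTr (k : ℕ) : seq X N k ⟶ seq X N (k + 1) :=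
  tr X (N - k) (N - (k + 1 : ℕ)) (by omega)

/-- inclusion -/
noncomputable def seqι (k : ℕ) : seq X N k ⟶ X := subι X (N - k)

lemma seqTr_ι (k : ℕ) : seqTr X N k ≫ seqι X N (k + 1) = seqι X N k := tr_subι ..

lemma seqι_inj (k : ℕ) (i : ℤ) : Function.Injective ((seqι X N k).f i) := subι_inj ..

lemma seqι_surj (i : ℤ) (x : X.X i) : ∃ (k : ℕ) (y : (seq X N k).X i), (seqι X N k).f i y = x :=
  ⟨(N - i).toNat, subι_lift X _ i x (fun h => by omega)⟩

/-- shift -/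
noncomputable def tsh : dsum (seq X N) ⟶ dsum (seq X N) :=
  ddesc fun k => seqTr X N k ≫ dincl _ (k + 1)

/-- projection -/
noncomputable def tpi : dsum (seq X N) ⟶ X := ddesc fun k => seqι X N k

lemma tel_zero : (𝟙 _ - tsh X N) ≫ tpi X N = 0 := by
  refine dhom_ext fun k => ?_
  rw [Preadditive.sub_comp, Category.id_comp, Preadditive.comp_sub, tsh, dincl_ddesc_assoc,
    Category.assoc, tpi, dincl_ddesc, dincl_ddesc, seqTr_ι, sub_self, comp_zero]

lemma inc_tsh (i : ℤ) (k : ℕ) : inc (seq X N) i k ≫ (tsh X N).f i =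
    (seqTr X N k).f i ≫ inc (seq X N) i (k + 1) := inc_ddesc _ _ _

lemma tsh_inc_apply (i : ℤ) (k : ℕ) (x : (seq X N k).X i) : (tsh X N).f i (inc _ i k x) =
    inc (seq X N) i (k + 1) ((seqTr X N k).f i x) :=
  ConcreteCategory.congr_hom (inc_tsh X N i k) x

lemma tpi_inc_apply (i : ℤ) (k : ℕ) (x : (seq X N k).X i) : (tpi X N).f i (inc _ i k x) =
    (seqι X N k).f i x :=
  ConcreteCategory.congr_hom (inc_ddesc _ i k) x

lemma tsh_cmp_zero (i : ℤ) : (tsh X N).f i ≫ cmp 0 = 0 := by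
  refine inc_hom_ext fun k => ?_
  rw [← Category.assoc, inc_tsh, Category.assoc, inc_cmp_ne _ _ _ (by omega), comp_zero, comp_zero]

lemma tsh_cmp_succ (i : ℤ) (l : ℕ) : (tsh X N).f i ≫ cmp (l + 1) = cmp l ≫ (seqTr X N l).f i := by
  refine inc_hom_ext fun k => ?_
  rw [← Category.assoc, inc_tsh, Category.assoc]
  by_cases h : k = l
  · subst h
    rw [inc_cmp_self, inc_cmp_self_assoc, Category.comp_id]
  · rw [inc_cmp_ne _ _ _ (by omega), inc_cmp_ne_assoc _ _ _ h, comp_zero, zero_comp]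

lemma tel_apply (i : ℤ) (x : (dsum (seq X N)).X i) :
    (𝟙 _ - tsh X N : dsum (seq X N) ⟶ dsum (seq X N)).f i x = x - (tsh X N).f i x := rfl

lemma tel_inj (i : ℤ) :
    Function.Injective ((𝟙 _ - tsh X N : dsum (seq X N) ⟶ dsum (seq X N)).f i) := by
  rw [injective_iff_map_eq_zero]
  intro x hx
  rw [tel_apply, sub_eq_zero] at hx
  have h : ∀ k, cmp k x = 0 := by
    intro k
    induction k with
    | zero =>
      rw [hx]
      exact ConcreteCategory.congr_hom (tsh_cmp_zero X N i) x
    | succ k ih =>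
      rw [hx]
      refine (ConcreteCategory.congr_hom (tsh_cmp_succ X N i k) x).trans ?_
      rw [ModuleCat.comp_apply, ih, map_zero]
  refine cmp_ext fun k => ?_
  rw [h, map_zero]

lemma tel_move (i : ℤ) {k l : ℕ} (h : k ≤ l) (z : (seq X N k).X i) :
    ∃ (z' : (seq X N l).X i) (x : (dsum (seq X N)).X i),
      inc _ i k z = (𝟙 _ - tsh X N : dsum (seq X N) ⟶ dsum (seq X N)).f i x + inc _ i l z' := by
  induction l, h using Nat.le_induction with
  | base => exact ⟨z, 0, by rw [map_zero, zero_add]⟩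
  | succ l hl ih =>
    obtain ⟨z', x, e⟩ := ih
    refine ⟨(seqTr X N l).f i z', x + inc _ i l z', ?_⟩
    rw [e, map_add, tel_apply X N i (inc _ i l z'), tsh_inc_apply]
    abel

lemma dsum_induction {J : Type} [DecidableEq J] {K : J → CochainComplex (ModuleCat.{u} R) ℤ}
    {i : ℤ} (P : (dsum K).X i → Prop) (h0 : P 0) (h1 : ∀ j x, P (inc K i j x))
    (h2 : ∀ x y, P x → P y → P (x + y)) (x : (dsum K).X i) : P x :=
  DirectSum.induction_on (β := fun j => (K j).X i) (motive := P) x h0 h1 h2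

lemma tel_normal (i : ℤ) (y : (dsum (seq X N)).X i) :
    ∃ (l : ℕ) (z : (seq X N l).X i) (x : (dsum (seq X N)).X i),
      y = (𝟙 _ - tsh X N : dsum (seq X N) ⟶ dsum (seq X N)).f i x + inc _ i l z := by
  induction y using dsum_induction with
  | h0 => exact ⟨0, 0, 0, by rw [map_zero, map_zero, add_zero]⟩
  | h1 j x => exact ⟨j, x, 0, by rw [map_zero, zero_add]⟩
  | h2 x y hx hy =>
    obtain ⟨l, z, a, e⟩ := hx
    obtain ⟨l', z', a', e'⟩ := hy
    obtain ⟨w, b, f⟩ := tel_move X N i (le_max_left l l') z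
    obtain ⟨w', b', f'⟩ := tel_move X N i (le_max_right l l') z'
    refine ⟨max l l', w + w', a + b + a' + b', ?_⟩
    rw [e, e', f, f', map_add, map_add, map_add, map_add]
    abel

/-- telescope short complex -/
noncomputable def telSc : ShortComplex (CochainComplex (ModuleCat.{u} R) ℤ) :=
  ShortComplex.mk _ _ (tel_zero X N)

lemma telSc_shortExact : (telSc X N).ShortExact := by
  apply HomologicalComplex.shortExact_of_degreewise_shortExact
  intro i
  refine { exact := ?_, mono_f := ?_, epi_g := ?_ }
  · rw [ShortComplex.moduleCat_exact_iff]
    intro (y : (dsum (seq X N)).X i) (hy : (tpi X N).f i y = 0)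
    obtain ⟨l, z, x, rfl⟩ := tel_normal X N i y
    have h0 : (tpi X N).f i ((𝟙 _ - tsh X N : dsum (seq X N) ⟶ dsum (seq X N)).f i x) = 0 :=
      ConcreteCategory.congr_hom
        (congrArg (fun t => HomologicalComplex.Hom.f t i) (tel_zero X N)) x
    rw [map_add, h0, zero_add, tpi_inc_apply] at hy
    have hz : z = 0 := seqι_inj X N l i (hy.trans (map_zero _).symm)
    refine ⟨x, ?_⟩
    rw [hz, map_zero, add_zero]
    rfl
  · exact (ModuleCat.mono_iff_injective _).2 (tel_inj X N i)
  · refine (ModuleCat.epi_iff_surjective _).2 fun x => ?_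
    obtain ⟨k, y, rfl⟩ := seqι_surj X N i x
    exact ⟨inc _ i k y, tpi_inc_apply X N i k y⟩

end Tel

section Final

variable {R : Type u} [Ring R] [HasDerivedCategory.{w} (ModuleCat.{u} R)]
    [HasCoproducts.{u} (DerivedCategory (ModuleCat.{u} R))]
    {C : DerivedCategory (ModuleCat.{u} R) → Prop}

lemma single_mem (hC : IsLocalizing.{u} (DerivedCategory (ModuleCat.{u} R)) C)
    (M : ModuleCat.{u} R)
    (hM : C ((DerivedCategory.singleFunctor (ModuleCat.{u} R) 0).obj M)) (m : ℤ) :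
    C (DerivedCategory.Q.obj ((HomologicalComplex.single _ _ m).obj M)) := by
  rw [DerivedCategory.Q_obj_single_obj]
  exact hC.iso_closed (((DerivedCategory.singleFunctors (ModuleCat.{u} R)).shiftIso
    (-m) m 0 (by omega)).app M) (hC.shift_closed _ (-m) hM)

lemma sub_zero_mem (hC : IsLocalizing.{u} (DerivedCategory (ModuleCat.{u} R)) C)
    (X : CochainComplex (ModuleCat.{u} R) ℤ) (N : ℤ) (hN : ∀ i, N ≤ i → IsZero (X.X i)) :
    C (DerivedCategory.Q.obj (sub X N)) := by
  refine hC.zero _ (DerivedCategory.Q.map_isZero ?_)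
  rw [IsZero.iff_id_eq_zero]
  ext i x : 3
  apply subι_inj
  by_cases h : i < N
  · rw [subι_eq_zero X N i h x, map_zero, map_zero, map_zero, map_zero]
  · exact ConcreteCategory.congr_hom ((hN i (by omega)).eq_of_tgt
      ((𝟙 (sub X N) : sub X N ⟶ sub X N).f i ≫ (subι X N).f i)
      ((0 : sub X N ⟶ sub X N).f i ≫ (subι X N).f i)) x

lemma sub_step_mem (hC : IsLocalizing.{u} (DerivedCategory (ModuleCat.{u} R)) C)
    (X : CochainComplex (ModuleCat.{u} R) ℤ)
    (hterms : ∀ i : ℤ,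
      C ((DerivedCategory.singleFunctor (ModuleCat.{u} R) 0).obj (X.X i)))
    (m : ℤ) (h : C (DerivedCategory.Q.obj (sub X (m + 1)))) :
    C (DerivedCategory.Q.obj (sub X m)) :=
  hC.ext_closed _ (DerivedCategory.triangleOfSES_distinguished (grSc_shortExact X m)) h
    (single_mem hC _ (hterms m) m)

lemma seq_mem (hC : IsLocalizing.{u} (DerivedCategory (ModuleCat.{u} R)) C)
    (X : CochainComplex (ModuleCat.{u} R) ℤ)
    (hterms : ∀ i : ℤ,
      C ((DerivedCategory.singleFunctor (ModuleCat.{u} R) 0).obj (X.X i)))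
    (N : ℤ) (hN : ∀ i, N ≤ i → IsZero (X.X i)) (k : ℕ) :
    C (DerivedCategory.Q.obj (seq X N k)) := by
  unfold seq
  induction k with
  | zero =>
    rw [Nat.cast_zero, sub_zero]
    exact sub_zero_mem hC X N hN
  | succ k ih =>
    apply sub_step_mem hC X hterms
    rwa [show N - ((k + 1 : ℕ) : ℤ) + 1 = N - k by omega]

lemma dsum_mem (hC : IsLocalizing.{u} (DerivedCategory (ModuleCat.{u} R)) C)
    (K : ℕ → CochainComplex (ModuleCat.{u} R) ℤ)
    (h : ∀ k, C (DerivedCategory.Q.obj (K k))) : C (DerivedCategory.Q.obj (dsum K)) :=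
  hC.iso_closed (Q_dsum_iso K).some (hC.coproduct_closed _ fun j => h j.down)

end Final

end LocAux


theorem bounded_above_termwise_in_localizing
    (R : Type u) [Ring R] [HasDerivedCategory.{w} (ModuleCat.{u} R)]
    [HasCoproducts.{u} (DerivedCategory (ModuleCat.{u} R))]
    (C : DerivedCategory (ModuleCat.{u} R) → Prop)
    (hC : IsLocalizing.{u} (DerivedCategory (ModuleCat.{u} R)) C)
    (X : CochainComplex (ModuleCat.{u} R) ℤ)
    (hbdd : ∃ n : ℤ, ∀ i : ℤ, n < i → IsZero (X.X i))
    (hterms : ∀ i : ℤ,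
      C ((DerivedCategory.singleFunctor (ModuleCat.{u} R) 0).obj (X.X i))) :
    C (DerivedCategory.Q.obj X) := by
  obtain ⟨n, hn⟩ := hbdd
  have h := LocAux.dsum_mem hC _ (LocAux.seq_mem hC X hterms (n + 1) (fun i hi => hn i (by omega)))
  exact hC.ext_closed _ (rot_of_distTriang _
    (DerivedCategory.triangleOfSES_distinguished (LocAux.telSc_shortExact X (n + 1)))) h
    (hC.shift_closed _ 1 h)
end

section
/- Let F : Mod B → Mod B be an additive endofunctor such that L_iF(F^j(P)) = 0 for every projective B-module P and all i, j ≥ 1 (where L_iF denotes the i-th left derived functor). Then for a B-module X the following are equivalent: (i) L_iF(F^j(X)) = 0 for all i ≥ 1 and j ≥ 0; (ii) L_iF^s(F^j(X)) = 0 for all i, s ≥ 1 and j ≥ 0; (iii) L_iF^j(X) = 0 for all i, j ≥ 1. -/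
/-!
STATEMENT 13: Let `F : Mod B ⥤ Mod B` be a (right exact) additive endofunctor
such that `L_iF(F^j(P)) = 0` for every projective `B`-module `P` and all
`i, j ≥ 1`.  Then for a `B`-module `X` the following are equivalent:
(i)   `L_iF(F^j(X)) = 0` for all `i ≥ 1` and `j ≥ 0`;
(ii)  `L_iF^s(F^j(X)) = 0` for all `i, s ≥ 1` and `j ≥ 0`;
(iii) `L_iF^j(X) = 0` for all `i, j ≥ 1`.
-/

open CategoryTheory CategoryTheory.Limits

universe u

variable {B : Type u} [Ring B]

/-- The `j`-fold composition power of an endofunctor, with `F^0` the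
identity functor. -/
def funPow (F : ModuleCat.{u} B ⥤ ModuleCat.{u} B) : ℕ → (ModuleCat.{u} B ⥤ ModuleCat.{u} B)
  | 0 => 𝟭 _
  | (j + 1) => funPow F j ⋙ F

instance (F : ModuleCat.{u} B ⥤ ModuleCat.{u} B) [F.Additive] (j : ℕ) :
    (funPow F j).Additive := by
  induction j with
  | zero => exact inferInstanceAs (𝟭 _).Additive
  | succ j ih => exact inferInstanceAs (funPow F j ⋙ F).Additive

set_option linter.unusedSectionVars false

section Helpers

variable {C : Type*} [Category* C] [Abelian C] [EnoughProjectives C]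
  {D : Type*} [Category* D] [Abelian D]

/-- The zeroth derived functor data: rotation of a short exact sequence along a
projective presentation of the middle term. -/
lemma dv_rot (S : ShortComplex C) (hS : S.ShortExact) :
    ∃ (P KB KC : C) (p : P ⟶ S.X₂) (i : KB ⟶ P) (k : KC ⟶ P) (u : KB ⟶ KC) (v : KC ⟶ S.X₁)
      (w₁ : i ≫ p = 0) (w₂ : k ≫ (p ≫ S.g) = 0) (w₃ : u ≫ v = 0), Projective P ∧
      (ShortComplex.mk i p w₁).ShortExact ∧
      (ShortComplex.mk k (p ≫ S.g) w₂).ShortExact ∧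
      (ShortComplex.mk u v w₃).ShortExact ∧ u ≫ k = i ∧ k ≫ p = v ≫ S.f := by
  have := hS.mono_f
  have := hS.epi_g
  let p := Projective.π S.X₂
  refine ⟨Projective.over S.X₂, kernel p, pullback S.f p, p, kernel.ι p, pullback.snd _ _,
    pullback.lift 0 (kernel.ι p) (by rw [zero_comp, kernel.condition]), pullback.fst _ _,
    kernel.condition _, ?_, pullback.lift_fst _ _ _,
    inferInstance, ?_, ?_, ?_, pullback.lift_snd _ _ _, pullback.condition.symm⟩
  · rw [← Category.assoc, ← pullback.condition, Category.assoc, S.zero, comp_zero]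
  · exact { exact := ShortComplex.exact_kernel p }
  · refine { exact := ?_, mono_f := ?_, epi_g := ?_ }
    · apply ShortComplex.exact_of_f_is_kernel
      refine KernelFork.IsLimit.ofι' _ _ (fun {A} a ha => ?_)
      have ha' : (a ≫ p) ≫ S.g = 0 := by simpa using ha
      exact ⟨pullback.lift (hS.exact.lift (a ≫ p) ha') a (by simp), pullback.lift_snd _ _ _⟩
    · dsimp; infer_instance
    · dsimp; infer_instance
  · have hm : Mono (pullback.lift (f := S.f) (g := p) (0 : kernel p ⟶ S.X₁) (kernel.ι p)
      (by rw [zero_comp, kernel.condition])) := by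
      have : Mono (pullback.lift (f := S.f) (g := p) (0 : kernel p ⟶ S.X₁) (kernel.ι p)
      (by rw [zero_comp, kernel.condition]) ≫
        pullback.snd S.f p) := by
        rw [pullback.lift_snd]; infer_instance
      exact mono_of_mono _ (pullback.snd S.f p)
    refine { exact := ?_, mono_f := hm, epi_g := ?_ }
    · apply ShortComplex.exact_of_f_is_kernel
      refine KernelFork.IsLimit.ofι' _ _ (fun {A} a ha => ?_)
      dsimp at ha
      refine ⟨kernel.lift p (a ≫ pullback.snd _ _) ?_, ?_⟩
      · rw [Category.assoc, ← pullback.condition, reassoc_of% ha, zero_comp]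
      · apply pullback.hom_ext
        · rw [Category.assoc, pullback.lift_fst, comp_zero]; exact ha.symm
        · rw [Category.assoc, pullback.lift_snd, kernel.lift_ι]
    · dsimp; infer_instance

lemma dv_mono_iff {A B K P : D} (a : A ⟶ B) (e : B ⟶ K) (m : K ⟶ P) (w : a ≫ e = 0)
    (h : (ShortComplex.mk a e w).Exact) [Epi e] (w' : a ≫ (e ≫ m) = 0) :
    (ShortComplex.mk a (e ≫ m) w').Exact ↔ Mono m := by
  constructor
  · intro h'
    refine Preadditive.mono_of_cancel_zero _ (fun {T} x hx => ?_)
    obtain ⟨T₁, p₁, _, y, hy⟩ := surjective_up_to_refinements_of_epi e x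
    obtain ⟨T₂, p₂, _, z, hz⟩ := h'.exact_up_to_refinements y (by
      dsimp
      rw [← reassoc_of% hy, hx, comp_zero])
    dsimp at hz
    rw [← cancel_epi p₁, ← cancel_epi p₂, hy, reassoc_of% hz, w]
    simp
  · intro h'
    let φ : ShortComplex.mk a e w ⟶ ShortComplex.mk a (e ≫ m) w' :=
      { τ₁ := 𝟙 _, τ₂ := 𝟙 _, τ₃ := m }
    have : Epi φ.τ₁ := by dsimp [φ]; infer_instance
    have : IsIso φ.τ₂ := by dsimp [φ]; infer_instance
    have : Mono φ.τ₃ := by dsimp [φ]; infer_instance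
    exact (ShortComplex.exact_iff_of_epi_of_isIso_of_mono φ).1 h

variable (F : C ⥤ D) [F.Additive]

lemma dv_isZero_iff {Y : C} (R : ProjectiveResolution Y) (n : ℕ) :
    IsZero ((F.leftDerived (n + 1)).obj Y) ↔
      (ShortComplex.mk (F.map (R.complex.d (n + 2) (n + 1))) (F.map (R.complex.d (n + 1) n))
        (by rw [← F.map_comp, R.complex.d_comp_d, F.map_zero])).Exact := by
  rw [(R.isoLeftDerivedObj F (n + 1)).isZero_iff]
  erw [← HomologicalComplex.exactAt_iff_isZero_homology]
  rw [HomologicalComplex.exactAt_iff' _ (n + 2) (n + 1) n (by simp) (by simp)]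
  rfl

/-- The augmentation of a projective resolution. -/
lemma dv_aug {Z : C} (Q : ProjectiveResolution Z) :
    ∃ (e : Q.complex.X 0 ⟶ Z) (w : Q.complex.d 1 0 ≫ e = 0),
      (ShortComplex.mk _ e w).Exact ∧ Epi e :=
  ⟨Q.π.f 0, Q.complex_d_comp_π_f_zero,
    ShortComplex.exact_of_g_is_cokernel _ Q.isColimitCokernelCofork,
    epi_of_isColimit_cofork Q.isColimitCokernelCofork⟩

/-- Constructor for projective resolutions. -/
lemma dv_mkRes {Y : C} (K : ChainComplex C ℕ) (hK : ∀ n, Projective (K.X n))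
    (e : K.X 0 ⟶ Y) (w : K.d 1 0 ≫ e = 0) (h : (ShortComplex.mk _ e w).Exact) [Epi e]
    (hex : ∀ n, (ShortComplex.mk _ _ (K.d_comp_d (n + 2) (n + 1) n)).Exact) :
    ∃ R : ProjectiveResolution Y, R.complex = K := by
  refine ⟨{ complex := K, projective := hK, π := (ChainComplex.toSingle₀Equiv _ _).symm ⟨e, w⟩,
            quasiIso := ⟨fun n => ?_⟩ }, rfl⟩
  rcases n with _ | n
  · rw [ChainComplex.quasiIsoAt₀_iff, ShortComplex.quasiIso_iff_of_zeros']
    · refine (ShortComplex.exact_and_epi_g_iff_of_iso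
        (S₂ := ShortComplex.mk _ e w) ?_).2 ⟨h, by dsimp; infer_instance⟩
      refine ShortComplex.isoMk (Iso.refl _) (Iso.refl _) (Iso.refl _) ?_ ?_
      · exact (Category.id_comp _).trans (Category.comp_id _).symm
      · refine (Category.id_comp _).trans (Eq.trans ?_ (Category.comp_id _).symm)
        exact (ChainComplex.toSingle₀Equiv_symm_apply_f_zero e w).symm
    · exact K.shape _ _ (by simp)
    all_goals rfl
  · rw [quasiIsoAt_iff_exactAt' _ _ (ChainComplex.exactAt_succ_single_obj _ _),
      HomologicalComplex.exactAt_iff' _ (n + 2) (n + 1) n (by simp) (by simp)]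
    exact hex n

/-- Dimension shifting along a projective presentation. -/
lemma dv_proj (S : ShortComplex C) (hS : S.ShortExact) (hP : Projective S.X₂)
    [PreservesFiniteColimits F] :
    (IsZero ((F.leftDerived 1).obj S.X₃) ↔ Mono (F.map S.f)) ∧
    (∀ n, IsZero ((F.leftDerived (n + 2)).obj S.X₃) ↔
      IsZero ((F.leftDerived (n + 1)).obj S.X₁)) := by
  have := hS.mono_f
  have := hS.epi_g
  let Q := projectiveResolution S.X₁
  obtain ⟨e, w, he, _⟩ := dv_aug Q
  have w' : Q.complex.d 1 0 ≫ e ≫ S.f = 0 := by rw [reassoc_of% w, zero_comp]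
  obtain ⟨R, hR⟩ : ∃ R : ProjectiveResolution S.X₃,
      R.complex = ChainComplex.augment Q.complex (e ≫ S.f) w' := by
    refine @dv_mkRes _ _ _ _ _ (ChainComplex.augment Q.complex (e ≫ S.f) w') ?_ S.g ?_ ?_
      (inferInstanceAs (Epi S.g)) ?_
    · rintro (_ | n)
      · exact hP
      · exact Q.projective n
    · change (e ≫ S.f) ≫ S.g = 0
      simp
    · let φ : ShortComplex.mk (e ≫ S.f) S.g (by simp) ⟶ S :=
        { τ₁ := e, τ₂ := 𝟙 _, τ₃ := 𝟙 _ }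
      have : Epi φ.τ₁ := by dsimp [φ]; infer_instance
      have : IsIso φ.τ₂ := by dsimp [φ]; infer_instance
      have : Mono φ.τ₃ := by dsimp [φ]; infer_instance
      exact (ShortComplex.exact_iff_of_epi_of_isIso_of_mono φ).2 hS.exact
    · rintro (_ | n)
      · exact (dv_mono_iff _ e S.f w he w').2 inferInstance
      · exact Q.exact_succ n
  have hF := ((Functor.preservesFiniteColimits_tfae F).out 3 1).1
    (inferInstance : PreservesFiniteColimits F)
  obtain ⟨hF1, hF2⟩ := hF _ ⟨he, inferInstanceAs (Epi e)⟩
  dsimp at hF2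
  constructor
  · rw [dv_isZero_iff F R 0]
    obtain ⟨K, hK, π, hπ⟩ := R
    dsimp at hR
    subst hR
    change (ShortComplex.mk (F.map (Q.complex.d 1 0)) (F.map (e ≫ S.f)) _).Exact ↔ _
    have := dv_mono_iff (F.map (Q.complex.d 1 0)) (F.map e) (F.map S.f)
      (by rw [← F.map_comp, w, F.map_zero]) hF1
      (by rw [← F.map_comp, ← F.map_comp, w', F.map_zero])
    rw [← this]
    simp only [F.map_comp]
  · intro n
    rw [dv_isZero_iff F R (n + 1), dv_isZero_iff F Q n]
    obtain ⟨K, hK, π, hπ⟩ := R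
    dsimp at hR
    subst hR
    rfl

lemma dv_rightExact [PreservesFiniteColimits F] (S : ShortComplex C) (hS : S.ShortExact) :
    (S.map F).Exact ∧ Epi (F.map S.g) := by
  have hF := ((Functor.preservesFiniteColimits_tfae F).out 3 0).1
    (inferInstance : PreservesFiniteColimits F)
  exact hF S hS

/-- If `L₁F` vanishes on the third term, `F` preserves the monomorphism. -/
lemma dv_M [PreservesFiniteColimits F] (S : ShortComplex C) (hS : S.ShortExact)
    (h : IsZero ((F.leftDerived 1).obj S.X₃)) : Mono (F.map S.f) := by
  obtain ⟨P, KB, KC, p, i, k, u, v, w₁, w₂, w₃, hP, h₁, h₂, h₃, huk, hkp⟩ := dv_rot S hS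
  have hk : Mono (F.map k) := (dv_proj F _ h₂ hP).1.1 h
  obtain ⟨e₁, _⟩ := dv_rightExact F _ h₁
  obtain ⟨e₃, _⟩ := dv_rightExact F _ h₃
  have e₁' : (ShortComplex.mk (F.map i) (F.map p)
    (by rw [← F.map_comp, w₁, F.map_zero])).Exact := e₁
  have hv : Epi (F.map v) := by assumption
  refine Preadditive.mono_of_cancel_zero _ (fun {T} x hx => ?_)
  obtain ⟨T₁, p₁, _, y, hy⟩ := surjective_up_to_refinements_of_epi (F.map v) x
  obtain ⟨T₂, p₂, _, z, hz⟩ := e₁'.exact_up_to_refinements (y ≫ F.map k) (by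
    dsimp
    rw [Category.assoc, ← F.map_comp, hkp, F.map_comp, ← reassoc_of% hy, hx, comp_zero])
  dsimp at hz
  have : p₂ ≫ y = z ≫ F.map u := by
    rw [← cancel_mono (F.map k), Category.assoc, hz, Category.assoc]
    exact congrArg (z ≫ ·) ((congrArg F.map huk).symm.trans (F.map_comp u k))
  rw [← cancel_epi p₁, ← cancel_epi p₂, hy, reassoc_of% this, ← F.map_comp, w₃]
  simp

/-- Conversely, for `L₁F` vanishing on the middle term. -/
lemma dv_N [PreservesFiniteColimits F] (S : ShortComplex C) (hS : S.ShortExact)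
    (hB : IsZero ((F.leftDerived 1).obj S.X₂)) (hm : Mono (F.map S.f)) :
    IsZero ((F.leftDerived 1).obj S.X₃) := by
  obtain ⟨P, KB, KC, p, i, k, u, v, w₁, w₂, w₃, hP, h₁, h₂, h₃, huk, hkp⟩ := dv_rot S hS
  refine (dv_proj F _ h₂ hP).1.2 ?_
  have hi : Mono (F.map i) := (dv_proj F _ h₁ hP).1.1 hB
  obtain ⟨e₃, _⟩ := dv_rightExact F _ h₃
  have e₃' : (ShortComplex.mk (F.map u) (F.map v)
    (by rw [← F.map_comp, w₃, F.map_zero])).Exact := e₃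
  change Mono (F.map k)
  refine Preadditive.mono_of_cancel_zero _ (fun {T} x hx => ?_)
  obtain ⟨T₁, p₁, _, y, hy⟩ := e₃'.exact_up_to_refinements x (by
    dsimp
    rw [← cancel_mono (F.map S.f), Category.assoc, ← F.map_comp, ← hkp, F.map_comp,
      reassoc_of% hx, zero_comp, zero_comp])
  dsimp at hy
  have : y = 0 := by
    rw [← cancel_mono (F.map i), ← huk, F.map_comp, ← reassoc_of% hy, hx]
    simp
  rw [← cancel_epi p₁, hy, this]
  simp

/-- Dimension shifting statements, proved simultaneously. -/
lemma dv_shift [PreservesFiniteColimits F] (n : ℕ) :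
    (∀ (S : ShortComplex C), S.ShortExact →
      (∀ m, IsZero ((F.leftDerived (m + 1)).obj S.X₂)) →
      (IsZero ((F.leftDerived (n + 2)).obj S.X₃) ↔
        IsZero ((F.leftDerived (n + 1)).obj S.X₁))) ∧
    (∀ (S : ShortComplex C), S.ShortExact →
      (∀ m, IsZero ((F.leftDerived (m + 1)).obj S.X₁)) → Mono (F.map S.f) →
      (IsZero ((F.leftDerived (n + 1)).obj S.X₂) ↔
        IsZero ((F.leftDerived (n + 1)).obj S.X₃))) ∧
    (∀ (S : ShortComplex C), S.ShortExact →
      (∀ m, IsZero ((F.leftDerived (m + 1)).obj S.X₃)) →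
      (IsZero ((F.leftDerived (n + 1)).obj S.X₁) ↔
        IsZero ((F.leftDerived (n + 1)).obj S.X₂))) := by
  induction n with
  | zero =>
    have hE' : ∀ (S : ShortComplex C), S.ShortExact →
      (∀ m, IsZero ((F.leftDerived (m + 1)).obj S.X₁)) → Mono (F.map S.f) →
      (IsZero ((F.leftDerived (0 + 1)).obj S.X₂) ↔
        IsZero ((F.leftDerived (0 + 1)).obj S.X₃)) := by
      intro S hS hA hm
      refine ⟨fun h => dv_N F S hS h hm, fun h => ?_⟩
      obtain ⟨P, KB, KC, p, i, k, u, v, w₁, w₂, w₃, hP, h₁, h₂, h₃, huk, hkp⟩ := dv_rot S hS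
      have hk : Mono (F.map k) := (dv_proj F _ h₂ hP).1.1 h
      have hu : Mono (F.map u) := dv_M F _ h₃ (hA 0)
      refine (dv_proj F _ h₁ hP).1.2 ?_
      change Mono (F.map i)
      rw [← huk, F.map_comp]
      infer_instance
    refine ⟨fun S hS hB => ?_, hE', fun S hS hC => ?_⟩
    · obtain ⟨P, KB, KC, p, i, k, u, v, w₁, w₂, w₃, hP, h₁, h₂, h₃, huk, hkp⟩ := dv_rot S hS
      have hi : Mono (F.map i) := (dv_proj F _ h₁ hP).1.1 (hB 0)
      have hu : Mono (F.map u) := by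
        rw [← huk, F.map_comp] at hi
        exact mono_of_mono _ (F.map k)
      exact ((dv_proj F _ h₂ hP).2 0).trans
        (hE' _ h₃ (fun m => ((dv_proj F _ h₁ hP).2 m).1 (hB (m + 1))) hu)
    · obtain ⟨P, KB, KC, p, i, k, u, v, w₁, w₂, w₃, hP, h₁, h₂, h₃, huk, hkp⟩ := dv_rot S hS
      have hk : Mono (F.map k) := (dv_proj F _ h₂ hP).1.1 (hC 0)
      have hKC : IsZero ((F.leftDerived 1).obj KC) := ((dv_proj F _ h₂ hP).2 0).1 (hC 1)
      refine Iff.trans ?_ (dv_proj F _ h₁ hP).1.symm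
      change _ ↔ Mono (F.map i)
      rw [← huk, F.map_comp]
      constructor
      · intro h
        have hu : Mono (F.map u) := dv_M F _ h₃ h
        infer_instance
      · intro h
        exact dv_N F _ h₃ hKC (mono_of_mono (F.map u) (F.map k))
  | succ n ih =>
    obtain ⟨ih₁, ih₂, ih₃⟩ := ih
    have hE' : ∀ (S : ShortComplex C), S.ShortExact →
      (∀ m, IsZero ((F.leftDerived (m + 1)).obj S.X₁)) → Mono (F.map S.f) →
      (IsZero ((F.leftDerived (n + 1 + 1)).obj S.X₂) ↔
        IsZero ((F.leftDerived (n + 1 + 1)).obj S.X₃)) := by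
      intro S hS hA hm
      obtain ⟨P, KB, KC, p, i, k, u, v, w₁, w₂, w₃, hP, h₁, h₂, h₃, huk, hkp⟩ := dv_rot S hS
      exact ((dv_proj F _ h₁ hP).2 n).trans
        ((ih₃ _ h₃ hA).trans ((dv_proj F _ h₂ hP).2 n).symm)
    refine ⟨fun S hS hB => ?_, hE', fun S hS hC => ?_⟩
    · obtain ⟨P, KB, KC, p, i, k, u, v, w₁, w₂, w₃, hP, h₁, h₂, h₃, huk, hkp⟩ := dv_rot S hS
      have hi : Mono (F.map i) := (dv_proj F _ h₁ hP).1.1 (hB 0)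
      have hu : Mono (F.map u) := by
        rw [← huk, F.map_comp] at hi
        exact mono_of_mono _ (F.map k)
      exact ((dv_proj F _ h₂ hP).2 (n + 1)).trans
        (hE' _ h₃ (fun m => ((dv_proj F _ h₁ hP).2 m).1 (hB (m + 1))) hu)
    · obtain ⟨P, KB, KC, p, i, k, u, v, w₁, w₂, w₃, hP, h₁, h₂, h₃, huk, hkp⟩ := dv_rot S hS
      exact (ih₁ _ h₃ (fun m => ((dv_proj F _ h₂ hP).2 m).1 (hC (m + 1)))).trans
        ((dv_proj F _ h₁ hP).2 n).symm

end Helpers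

section Composite

variable {C : Type*} [Category* C] [Abelian C] [EnoughProjectives C]
  {D : Type*} [Category* D] [Abelian D]

lemma dv_id (n : ℕ) (X : C) : IsZero (((𝟭 C).leftDerived (n + 1)).obj X) := by
  induction n generalizing X with
  | zero =>
    exact (dv_proj (𝟭 C) (ShortComplex.mk _ _ (kernel.condition (Projective.π X)))
      { exact := ShortComplex.exact_kernel _ } (Projective.projective_over X)).1.2
      (inferInstanceAs (Mono (kernel.ι (Projective.π X))))
  | succ n ih =>
    exact ((dv_proj (𝟭 C) (ShortComplex.mk _ _ (kernel.condition (Projective.π X)))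
      { exact := ShortComplex.exact_kernel _ } (Projective.projective_over X)).2 n).2 (ih _)

/-- The key comparison: if `G` sends projectives to `F`-acyclics and `X` is `G`-acyclic, then
`L_i F (G X)` and `L_i (FG) (X)` vanish simultaneously. -/
lemma dv_comp (G : C ⥤ C) (F : C ⥤ D) [G.Additive] [F.Additive]
    [PreservesFiniteColimits G] [PreservesFiniteColimits F]
    (hG : ∀ P : C, Projective P → ∀ m, IsZero ((F.leftDerived (m + 1)).obj (G.obj P)))
    (n : ℕ) (X : C) (hX : ∀ m, IsZero ((G.leftDerived (m + 1)).obj X)) :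
    IsZero ((F.leftDerived (n + 1)).obj (G.obj X)) ↔
      IsZero (((G ⋙ F).leftDerived (n + 1)).obj X) := by
  induction n generalizing X with
  | zero =>
    let S := ShortComplex.mk _ _ (kernel.condition (Projective.π X))
    have hS : S.ShortExact := { exact := ShortComplex.exact_kernel _ }
    have hP : Projective S.X₂ := Projective.projective_over X
    have hm := (dv_proj G S hS hP).1.1 (hX 0)
    obtain ⟨hS', he⟩ := dv_rightExact G S hS
    have hGS : (S.map G).ShortExact := { exact := hS', mono_f := hm, epi_g := he }
    refine Iff.trans ?_ (dv_proj (G ⋙ F) S hS hP).1.symm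
    exact ⟨fun h => dv_M F _ hGS h, fun h => dv_N F _ hGS (hG _ hP 0) h⟩
  | succ n ih =>
    let S := ShortComplex.mk _ _ (kernel.condition (Projective.π X))
    have hS : S.ShortExact := { exact := ShortComplex.exact_kernel _ }
    have hP : Projective S.X₂ := Projective.projective_over X
    have hm := (dv_proj G S hS hP).1.1 (hX 0)
    obtain ⟨hS', he⟩ := dv_rightExact G S hS
    have hGS : (S.map G).ShortExact := { exact := hS', mono_f := hm, epi_g := he }
    exact ((dv_shift F n).1 _ hGS (hG _ hP)).trans
      ((ih S.X₁ (fun m => ((dv_proj G S hS hP).2 m).1 (hX (m + 1)))).trans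
      ((dv_proj (G ⋙ F) S hS hP).2 n).symm)

end Composite

instance dv_funPow_preserves (F : ModuleCat.{u} B ⥤ ModuleCat.{u} B)
    [PreservesFiniteColimits F] (j : ℕ) : PreservesFiniteColimits (funPow F j) := by
  induction j with
  | zero => exact inferInstanceAs (PreservesFiniteColimits (𝟭 _))
  | succ j ih => exact inferInstanceAs (PreservesFiniteColimits (funPow F j ⋙ F))

lemma dv_funPow_obj (F : ModuleCat.{u} B ⥤ ModuleCat.{u} B) (a j : ℕ) (X : ModuleCat.{u} B) :
    (funPow F a).obj ((funPow F j).obj X) = (funPow F (j + a)).obj X := by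
  induction a with
  | zero => rfl
  | succ a ih => exact congrArg F.obj ih

/-- Comparison for powers of `F`. -/
lemma dv_step (F : ModuleCat.{u} B ⥤ ModuleCat.{u} B) [F.Additive]
    [PreservesFiniteColimits F]
    (hproj : ∀ (P : ModuleCat.{u} B), Projective P → ∀ i j : ℕ, 1 ≤ i → 1 ≤ j →
      IsZero ((F.leftDerived i).obj ((funPow F j).obj P)))
    (X : ModuleCat.{u} B) (j : ℕ)
    (hX : ∀ m, IsZero (((funPow F j).leftDerived (m + 1)).obj X)) (n : ℕ) :
    IsZero ((F.leftDerived (n + 1)).obj ((funPow F j).obj X)) ↔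
      IsZero (((funPow F (j + 1)).leftDerived (n + 1)).obj X) := by
  refine dv_comp (funPow F j) F (fun P hP m => ?_) n X hX
  rcases j with _ | j
  · exact F.isZero_leftDerived_obj_projective_succ m P
  · exact hproj P hP _ _ (by omega) (by omega)

lemma dv_one_three (F : ModuleCat.{u} B ⥤ ModuleCat.{u} B) [F.Additive]
    [PreservesFiniteColimits F]
    (hproj : ∀ (P : ModuleCat.{u} B), Projective P → ∀ i j : ℕ, 1 ≤ i → 1 ≤ j →
      IsZero ((F.leftDerived i).obj ((funPow F j).obj P)))
    (X : ModuleCat.{u} B)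
    (h : ∀ i j : ℕ, 1 ≤ i → IsZero ((F.leftDerived i).obj ((funPow F j).obj X)))
    (j m : ℕ) : IsZero (((funPow F j).leftDerived (m + 1)).obj X) := by
  induction j generalizing m with
  | zero => exact dv_id m X
  | succ j ih => exact (dv_step F hproj X j ih m).1 (h _ _ (by omega))


theorem derived_vanishing_tfae
    (F : ModuleCat.{u} B ⥤ ModuleCat.{u} B) [F.Additive]
    [PreservesFiniteColimits F]
    (hproj : ∀ (P : ModuleCat.{u} B), Projective P → ∀ i j : ℕ, 1 ≤ i → 1 ≤ j →
      IsZero ((F.leftDerived i).obj ((funPow F j).obj P)))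
    (X : ModuleCat.{u} B) :
    List.TFAE
      [ (∀ i j : ℕ, 1 ≤ i →
          IsZero ((F.leftDerived i).obj ((funPow F j).obj X))),
        (∀ i s j : ℕ, 1 ≤ i → 1 ≤ s →
          IsZero (((funPow F s).leftDerived i).obj ((funPow F j).obj X))),
        (∀ i j : ℕ, 1 ≤ i → 1 ≤ j →
          IsZero (((funPow F j).leftDerived i).obj X)) ] := by
  tfae_have 1 → 2 := by
    intro h i s j hi hs
    obtain ⟨m, rfl⟩ : ∃ m, i = m + 1 := ⟨i - 1, by omega⟩
    refine dv_one_three F hproj _ (fun i a hi => ?_) s m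
    rw [dv_funPow_obj]
    exact h _ _ hi
  tfae_have 2 → 3 := by
    intro h i j hi hj
    exact h i j 0 hi hj
  tfae_have 3 → 1 := by
    intro h i j hi
    obtain ⟨m, rfl⟩ : ∃ m, i = m + 1 := ⟨i - 1, by omega⟩
    refine (dv_step F hproj X j (fun m => ?_) m).2 (h _ _ (by omega) (by omega))
    rcases j with _ | j
    · exact dv_id m X
    · exact h _ _ (by omega) (by omega)
  tfae_finish
end
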